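/- If X ⊂ ℝ³ is a discrete set such that the translates {C₃ + x : x ∈ X} cover ℝ³, where C₃ = {p ∈ ℝ³ : ‖p‖₁ ≤ 2}, and P = conv{(±8,0,0),(0,±8,0),(0,0,±8),(8,8,8),(-8,-8,-8)}, then ∑_{x∈X} vol(P ∩ (C₃+x)) ≥ (1 + 4/6¹⁰)·vol(P). -/

import Mathlib

open Set Pointwise MeasureTheory ENNReal

/-- The regular octahedron `C₃` (the ℓ¹-ball of radius 2 in ℝ³). -/
def C₃ : Set (Fin 3 → ℝ) := {p | |p 0| + |p 1| + |p 2| ≤ 2}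

/-- The parallelohedron `P`, the convex hull of the eight listed points. -/
def P : Set (Fin 3 → ℝ) :=
  convexHull ℝ
    {![8, 0, 0], ![-8, 0, 0], ![0, 8, 0], ![0, -8, 0],
     ![0, 0, 8], ![0, 0, -8], ![8, 8, 8], ![-8, -8, -8]}

/-- If `t` lies at `ℓ¹`-distance at most `2` from a point `p` just above the face
`a + b + c = 2` of the octahedron of radius `2` and has `ℓ¹`-norm close to `4`, then `t` nearly dominates `p`. -/
lemma dominates_of_cover {a b c t u v : ℝ} (ha : 1 / 26 ≤ a) (hb : 1 / 26 ≤ b) (hc : 1 / 26 ≤ c)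
    (hs : a + b + c = 2 + 1 / 351) (hd : |t - a| + |u - b| + |v - c| ≤ 2)
    (hn : 4 - 2 / 27 < |t| + |u| + |v|) :
    a - 1 / 26 ≤ t ∧ b - 1 / 26 ≤ u ∧ c - 1 / 26 ≤ v ∧
      4 - 2 / 27 < t + u + v ∧ t + u + v ≤ 4 + 1 / 351 := by
  have slack : ∀ {x y : ℝ}, 1 / 26 ≤ x → 0 ≤ |y - x| + x - |y| ∧
      (|y - x| + x - |y| < 1 / 13 → x - 1 / 26 ≤ y ∧ |y| = y) := by
    intro x y hx
    refine ⟨by linarith [abs_sub_abs_le_abs_sub y x, abs_of_nonneg (by linarith : 0 ≤ x)], ?_⟩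
    intro h
    rcases le_total 0 y with hy | hy
    · rw [abs_of_nonneg hy] at *
      exact ⟨by linarith [neg_abs_le (y - x)], rfl⟩
    · rw [abs_of_nonpos hy, abs_of_nonpos (by linarith)] at h
      linarith
  obtain ⟨h1, h1'⟩ := slack (y := t) ha
  obtain ⟨h2, h2'⟩ := slack (y := u) hb
  obtain ⟨h3, h3'⟩ := slack (y := v) hc
  obtain ⟨k1, e1⟩ := h1' (by linarith)
  obtain ⟨k2, e2⟩ := h2' (by linarith)
  obtain ⟨k3, e3⟩ := h3' (by linarith)
  refine ⟨k1, k2, k3, by linarith, ?_⟩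
  linarith [le_abs_self (t - a), le_abs_self (u - b), le_abs_self (v - c)]

lemma abs_sub_eq_add_sub_two_mul_min (x y : ℝ) : |x - y| = x + y - 2 * min x y := by
  rcases le_total x y with h | h
  · rw [min_eq_left h, abs_of_nonpos (by linarith)]; ring
  · rw [min_eq_right h, abs_of_nonneg (by linarith)]; ring

/-- A neighbourhood of a face of an octahedron cannot be covered by well separated octahedra, one of which contains
a point just above the centre of the face and has its last coordinate at most a third of `4 + 1 / 351`. -/
lemma not_separated_of_last_le (Q : ℝ → ℝ → ℝ → Prop)
    (hnorm : ∀ t u v, Q t u v → 4 - 2 / 27 < |t| + |u| + |v|)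
    (hcov : ∀ a b c : ℝ, 0 < a → 0 < b → 0 < c → a + b + c = 2 + 1 / 351 →
      ∃ t u v, Q t u v ∧ |t - a| + |u - b| + |v - c| ≤ 2)
    (hsep : ∀ t u v t' u' v', Q t u v → Q t' u' v' → (t = t' ∧ u = u' ∧ v = v') ∨
      4 - 2 / 27 < |t - t'| + |u - u'| + |v - v'|)
    {t u v : ℝ} (hQ : Q t u v) (hd : |t - 703 / 1053| + |u - 703 / 1053| + |v - 703 / 1053| ≤ 2)
    (hv : v ≤ 1405 / 1053) : False := by
  obtain ⟨ht, hu, hv', hlo, hhi⟩ := dominates_of_cover (by norm_num) (by norm_num) (by norm_num)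
    (by norm_num) hd (hnorm _ _ _ hQ)
  have hmin : ∀ {x y z x' y' z' : ℝ}, Q x y z → Q x' y' z' → x + y + z ≤ 4 + 1 / 351 →
      x' + y' + z' ≤ 4 + 1 / 351 →
      z ≠ z' → min x x' + min y y' + min z z' < 2 + 1 / 351 + 1 / 27 := by
    intro x y z x' y' z' h h' hs hs' hne
    rcases hsep _ _ _ _ _ _ h h' with ⟨-, -, e⟩ | h
    · exact absurd e hne
    · simp only [abs_sub_eq_add_sub_two_mul_min] at h
      linarith
  -- two points near the face just beyond the top side of the face of the octahedron at `(t, u, v)`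
  obtain ⟨a, b, hab, ha, hb, hat, hbu⟩ : ∃ a b : ℝ, a + b = 2 + 1 / 351 - v - 1 / 18 ∧
      13 / 54 ≤ a ∧ 13 / 54 ≤ b ∧ a ≤ t - 9 / 27 ∧ b ≤ u - 9 / 27 := by
    rcases le_total (13 / 54) (2 + 1 / 351 - v - 1 / 18 - (u - 9 / 27)) with h | h
    · exact ⟨2 + 1 / 351 - v - 1 / 18 - (u - 9 / 27), u - 9 / 27, by ring, h, by linarith,
        by linarith, le_rfl⟩
    · exact ⟨13 / 54, 2 + 1 / 351 - v - 1 / 18 - 13 / 54, by ring, le_rfl, by linarith,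
        by linarith, by linarith⟩
  obtain ⟨t₁, u₁, v₁, hQ₁, hd₁⟩ := hcov a b (v + 1 / 18) (by linarith) (by linarith)
    (by linarith) (by linarith)
  obtain ⟨t₂, u₂, v₂, hQ₂, hd₂⟩ := hcov (a + 5 / 27) (b - 5 / 27) (v + 1 / 18) (by linarith)
    (by linarith) (by linarith) (by linarith)
  obtain ⟨ht₁, hu₁, hv₁, hlo₁, hhi₁⟩ := dominates_of_cover (by linarith) (by linarith)
    (by linarith) (by linarith) hd₁ (hnorm _ _ _ hQ₁)
  obtain ⟨ht₂, hu₂, hv₂, hlo₂, hhi₂⟩ := dominates_of_cover (by linarith) (by linarith)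
    (by linarith) (by linarith) hd₂ (hnorm _ _ _ hQ₂)
  have m₁ := hmin hQ hQ₁ hhi hhi₁ (by linarith)
  have m₂ := hmin hQ hQ₂ hhi hhi₂ (by linarith)
  rw [min_eq_left (by linarith : v ≤ v₁)] at m₁
  rw [min_eq_left (by linarith : v ≤ v₂)] at m₂
  have lt₁ : a - 1 / 26 ≤ min t t₁ := le_min (by linarith) ht₁
  have lu₁ : b - 1 / 26 ≤ min u u₁ := le_min (by linarith) hu₁
  have lt₂ : a + 5 / 27 - 1 / 26 ≤ min t t₂ := le_min (by linarith) ht₂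
  have lu₂ : b - 5 / 27 - 1 / 26 ≤ min u u₂ := le_min (by linarith) hu₂
  have et₁ : min t t₁ = t₁ := (min_choice t t₁).resolve_left fun h => by linarith
  have eu₁ : min u u₁ = u₁ := (min_choice u u₁).resolve_left fun h => by linarith
  have et₂ : min t t₂ = t₂ := (min_choice t t₂).resolve_left fun h => by linarith
  have eu₂ : min u u₂ = u₂ := (min_choice u u₂).resolve_left fun h => by linarith
  rw [et₁, eu₁] at m₁
  rw [et₂, eu₂] at m₂
  rcases hsep _ _ _ _ _ _ hQ₁ hQ₂ with ⟨e1, e2, e3⟩ | h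
  · linarith
  · simp only [abs_sub_eq_add_sub_two_mul_min] at h
    have h1 : a - 1 / 26 ≤ min t₁ t₂ := le_min (by linarith) (by linarith)
    have h2 : b - 5 / 27 - 1 / 26 ≤ min u₁ u₂ := le_min (by linarith) (by linarith)
    have h3 : 2 + v - 1 / 9 - 1 / 351 ≤ min v₁ v₂ := le_min (by linarith) (by linarith)
    linarith

lemma not_separated_of_covers_face (Q : ℝ → ℝ → ℝ → Prop)
    (hnorm : ∀ t u v, Q t u v → 4 - 2 / 27 < |t| + |u| + |v|)
    (hcov : ∀ a b c : ℝ, 0 < a → 0 < b → 0 < c → a + b + c = 2 + 1 / 351 →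
      ∃ t u v, Q t u v ∧ |t - a| + |u - b| + |v - c| ≤ 2)
    (hsep : ∀ t u v t' u' v', Q t u v → Q t' u' v' → (t = t' ∧ u = u' ∧ v = v') ∨
      4 - 2 / 27 < |t - t'| + |u - u'| + |v - v'|) : False := by
  obtain ⟨t, u, v, hQ, hd⟩ := hcov (703 / 1053) (703 / 1053) (703 / 1053) (by norm_num) (by norm_num)
    (by norm_num) (by norm_num)
  have hsum : t + u + v ≤ 4 + 1 / 351 := by
    linarith [le_abs_self (t - 703 / 1053), le_abs_self (u - 703 / 1053),
      le_abs_self (v - 703 / 1053)]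
  by_cases hv : v ≤ 1405 / 1053
  · exact not_separated_of_last_le Q hnorm hcov hsep hQ hd hv
  by_cases hu : u ≤ 1405 / 1053
  · refine not_separated_of_last_le (fun x y z => Q x z y) (fun x y z h => ?_)
      (fun a b c ha hb hc hs => ?_) (fun x y z x' y' z' h h' => ?_) hQ (by linarith) hu
    · linarith [hnorm _ _ _ h]
    · obtain ⟨x, y, z, h, h'⟩ := hcov a c b ha hc hb (by linarith)
      exact ⟨x, z, y, h, by linarith⟩
    · rcases hsep _ _ _ _ _ _ h h' with h | h
      · exact Or.inl (by tauto)
      · exact Or.inr (by linarith)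
  · refine not_separated_of_last_le (fun x y z => Q z y x) (fun x y z h => ?_)
      (fun a b c ha hb hc hs => ?_) (fun x y z x' y' z' h h' => ?_) hQ (by linarith)
      (by linarith)
    · linarith [hnorm _ _ _ h]
    · obtain ⟨x, y, z, h, h'⟩ := hcov c b a hc hb ha (by linarith)
      exact ⟨z, y, x, h, by linarith⟩
    · rcases hsep _ _ _ _ _ _ h h' with h | h
      · exact Or.inl (by tauto)
      · exact Or.inr (by linarith)

lemma mem_vadd_C₃ {x p : Fin 3 → ℝ} :
    p ∈ x +ᵥ C₃ ↔ |p 0 - x 0| + |p 1 - x 1| + |p 2 - x 2| ≤ 2 := by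
  rw [mem_vadd_set_iff_neg_vadd_mem]
  simp [C₃, neg_add_eq_sub]

/-- A translative covering by octahedra has two centres close to the origin that are closer than
`4` to each other by a definite amount. -/
lemma exists_close_centers {X : Set (Fin 3 → ℝ)} (hcov : ⋃ x ∈ X, x +ᵥ C₃ = univ) :
    ∃ x ∈ X, ∃ y ∈ X, x ≠ y ∧ |x 0| + |x 1| + |x 2| ≤ 7 ∧ |y 0| + |y 1| + |y 2| ≤ 7 ∧
      |x 0 - y 0| + |x 1 - y 1| + |x 2 - y 2| ≤ 4 - 2 / 27 := by
  have hc : ∀ p : Fin 3 → ℝ, ∃ x ∈ X, |p 0 - x 0| + |p 1 - x 1| + |p 2 - x 2| ≤ 2 := by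
    intro p
    have hp : p ∈ ⋃ x ∈ X, x +ᵥ C₃ := hcov ▸ mem_univ p
    simpa only [mem_iUnion, exists_prop, mem_vadd_C₃] using hp
  obtain ⟨o, ho, ho2⟩ := hc 0
  simp only [Pi.zero_apply, zero_sub, abs_neg] at ho2
  by_contra! hfar
  have bound : ∀ t u v : ℝ, |t| + |u| + |v| ≤ 5 →
      |(o + ![t, u, v]) 0| + |(o + ![t, u, v]) 1| + |(o + ![t, u, v]) 2| ≤ 7 := by
    intro t u v h
    simp only [Pi.add_apply, Matrix.cons_val]
    linarith [abs_add_le (o 0) t, abs_add_le (o 1) u, abs_add_le (o 2) v]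
  refine not_separated_of_covers_face
    (fun t u v => o + ![t, u, v] ∈ X ∧ |t| + |u| + |v| ≤ 5 ∧ o + ![t, u, v] ≠ o) ?_ ?_ ?_
  · rintro t u v ⟨h, h4, h0⟩
    simpa using hfar _ h _ ho h0 (bound _ _ _ h4) (by linarith)
  · intro a b c ha hb hcc hs
    obtain ⟨x, hx, hx2⟩ := hc (o + ![a, b, c])
    have e : o + ![x 0 - o 0, x 1 - o 1, x 2 - o 2] = x := by
      ext i; fin_cases i <;> simp
    simp only [Pi.add_apply, Matrix.cons_val] at hx2
    have hd : |x 0 - o 0 - a| + |x 1 - o 1 - b| + |x 2 - o 2 - c| ≤ 2 := by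
      have k : ∀ y z w : ℝ, |y - z - w| = |z + w - y| := fun y z w => by
        rw [sub_sub, abs_sub_comm]
      rwa [k, k, k]
    refine ⟨_, _, _, ⟨e.symm ▸ hx, ?_, ?_⟩, hd⟩
    · linarith [abs_sub_abs_le_abs_sub (x 0 - o 0) a, abs_sub_abs_le_abs_sub (x 1 - o 1) b,
        abs_sub_abs_le_abs_sub (x 2 - o 2) c, abs_of_pos ha, abs_of_pos hb, abs_of_pos hcc]
    · rw [e]
      rintro rfl
      simp only [sub_self, zero_sub, abs_neg, abs_of_pos ha, abs_of_pos hb, abs_of_pos hcc] at hd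
      linarith
  · rintro t u v t' u' v' ⟨h, h4, -⟩ ⟨h', h4', -⟩
    by_cases e : o + ![t, u, v] = o + ![t', u', v']
    · left
      simpa using e
    · right
      simpa using hfar _ h _ h' e (bound _ _ _ h4) (bound _ _ _ h4')

lemma volume_l1_ball (x : Fin 3 → ℝ) {r : ℝ} (hr : 0 ≤ r) :
    volume {p : Fin 3 → ℝ | |p 0 - x 0| + |p 1 - x 1| + |p 2 - x 2| ≤ r} =
      ENNReal.ofReal (4 / 3 * r ^ 3) := by
  have h := MeasureTheory.volume_sum_rpow_le (Fin 3) (le_refl (1 : ℝ)) r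
  have hG : Real.Gamma (3 + 1) = 6 := by
    have := Real.Gamma_nat_eq_factorial 3
    norm_num [Nat.factorial] at this ⊢
  have h2 : Real.Gamma (1 + 1) = 1 := by
    have := Real.Gamma_nat_eq_factorial 1
    norm_num at this ⊢
  simp only [Fin.sum_univ_three, Real.rpow_one, div_one, Fintype.card_fin, Nat.cast_ofNat, hG,
    h2] at h
  have e : {p : Fin 3 → ℝ | |p 0 - x 0| + |p 1 - x 1| + |p 2 - x 2| ≤ r} =
      (fun p => p - x) ⁻¹' {p : Fin 3 → ℝ | |p 0| + |p 1| + |p 2| ≤ r} := by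
    ext p; simp
  rw [e, (measurePreserving_sub_right volume x).measure_preimage
    (measurableSet_le (by fun_prop) (by fun_prop)).nullMeasurableSet, h,
    ← ENNReal.ofReal_pow hr, ← ENNReal.ofReal_mul (by positivity)]
  congr 1
  ring

lemma volume_P_le : volume P ≤ 1024 := by
  let A : Matrix (Fin 3) (Fin 3) ℝ := !![1, 1, -1; 1, -1, 1; -1, 1, 1]
  have hdet : A.det = -4 := by
    simp [A, Matrix.det_fin_three]; norm_num
  have hsub : P ⊆ Matrix.toLin' A ⁻¹' Icc (fun _ => -8) (fun _ => 8) := by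
    refine convexHull_min ?_ ((convex_Icc _ _).linear_preimage _)
    rintro p (rfl | rfl | rfl | rfl | rfl | rfl | rfl | rfl) <;>
    · rw [mem_preimage, mem_Icc, Pi.le_def, Pi.le_def, Fin.forall_fin_succ]
      simp [Fin.forall_fin_succ, A, Matrix.toLin'_apply, Matrix.mulVec, dotProduct,
        Fin.sum_univ_three]
      try norm_num
  refine (measure_mono hsub).trans ?_
  rw [Measure.addHaar_preimage_linearMap _ (by rw [LinearMap.det_toLin', hdet]; norm_num),
    LinearMap.det_toLin', hdet, Real.volume_Icc_pi]
  simp only [Fin.prod_univ_three]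
  rw [← ENNReal.ofReal_mul (by norm_num), ← ENNReal.ofReal_mul (by norm_num),
    ← ENNReal.ofReal_mul (by norm_num), show (1024 : ℝ≥0∞) = ENNReal.ofReal 1024 by norm_num]
  refine ENNReal.ofReal_le_ofReal ?_
  norm_num [abs_of_neg, abs_of_pos]

lemma mem_P_of_l1_le {p : Fin 3 → ℝ} (hp : |p 0| + |p 1| + |p 2| ≤ 8) : p ∈ P := by
  let z : Fin 6 → Fin 3 → ℝ :=
    ![![8, 0, 0], ![-8, 0, 0], ![0, 8, 0], ![0, -8, 0], ![0, 0, 8], ![0, 0, -8]]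
  let r : ℝ := (8 - (|p 0| + |p 1| + |p 2|)) / 16
  let w : Fin 6 → ℝ :=
    ![(|p 0| + p 0) / 16 + r, (|p 0| - p 0) / 16 + r, (|p 1| + p 1) / 16, (|p 1| - p 1) / 16,
      (|p 2| + p 2) / 16, (|p 2| - p 2) / 16]
  have hr : 0 ≤ r := by simp only [r]; linarith
  have hw : ∀ i ∈ Finset.univ, 0 ≤ w i := by
    intro i _
    fin_cases i <;> simp [w] <;>
      linarith [neg_abs_le (p 0), le_abs_self (p 0), neg_abs_le (p 1), le_abs_self (p 1),
        neg_abs_le (p 2), le_abs_self (p 2)]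
  have hw1 : ∑ i, w i = 1 := by
    simp [w, r, Fin.sum_univ_succ]; ring
  have hz : ∀ i ∈ Finset.univ, z i ∈ P := by
    intro i _
    apply subset_convexHull ℝ _
    fin_cases i <;> simp [z]
  have h := (convex_convexHull ℝ _).sum_mem hw hw1 hz
  have e : ∑ i, w i • z i = p := by
    ext j
    fin_cases j <;> simp [w, z, Fin.sum_univ_succ] <;> ring
  rwa [e] at h

/-- If two members of a countable covering family share a measurable set `M` inside `S`, then the
total measure of the traces on `S` exceeds that of `S` by at least the measure of `M`. -/
lemma measure_add_le_tsum_of_overlap {α ι : Type*} [MeasurableSpace α] [Countable ι]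
    {μ : Measure α} {S M : Set α} {T : ι → Set α} (hT : ⋃ i, T i = univ) (hM : MeasurableSet M)
    (hMS : M ⊆ S) {i j : ι} (hij : i ≠ j) (hi : M ⊆ T i) (hj : M ⊆ T j) :
    μ S + μ M ≤ ∑' k, μ (S ∩ T k) := by
  classical
  let N : ι → Set α := fun k => if k = i then M else ∅
  have hcover : S ⊆ ⋃ k, (S ∩ T k) \ N k := by
    intro p hp
    obtain ⟨k, hk⟩ := mem_iUnion.1 (hT.symm ▸ mem_univ p : p ∈ ⋃ k, T k)
    by_cases hpM : p ∈ M
    · exact mem_iUnion.2 ⟨j, ⟨hp, hj hpM⟩, by simp [N, hij.symm]⟩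
    · refine mem_iUnion.2 ⟨k, ⟨hp, hk⟩, ?_⟩
      by_cases e : k = i <;> simp [N, e, hpM]
  calc μ S + μ M ≤ (∑' k, μ ((S ∩ T k) \ N k)) + ∑' k, μ (N k) := by
        refine add_le_add ((measure_mono hcover).trans (measure_iUnion_le _)) ?_
        simpa [N] using ENNReal.le_tsum (f := fun k => μ (N k)) i
    _ = ∑' k, (μ ((S ∩ T k) \ N k) + μ (N k)) := ENNReal.tsum_add.symm
    _ ≤ ∑' k, μ (S ∩ T k) := by
        refine ENNReal.tsum_le_tsum fun k => ?_
        by_cases e : k = i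
        · subst e
          have hsub : M ⊆ S ∩ T k := subset_inter hMS hi
          have h := measure_sdiff_add_inter (μ := μ) (S ∩ T k) hM
          rw [inter_eq_self_of_subset_right hsub] at h
          simp only [N, if_true, h, le_refl]
        · simp [N, e]

/-- In any translative covering `C₃ + X` of ℝ³ by a discrete set `X`, the total
volume of the pieces of the translates inside the parallelohedron `P` is at
least `(1 + 4/6¹⁰) · vol(P)`. -/
theorem covering_density_in_P (X : Set (Fin 3 → ℝ))
    (hdisc : DiscreteTopology ↥X)
    (hcov : ⋃ x ∈ X, x +ᵥ C₃ = univ) :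
    (1 + 4 / 6 ^ 10 : ℝ≥0∞) * volume P ≤
      ∑' x : X, volume (P ∩ ((x : Fin 3 → ℝ) +ᵥ C₃)) := by
  have : Countable X := TopologicalSpace.separableSpace_iff_countable.1 inferInstance
  obtain ⟨x, hx, y, hy, hne, hx7, hy7, hxy⟩ := exists_close_centers hcov
  let m : Fin 3 → ℝ := fun i => (x i + y i) / 2
  let M : Set (Fin 3 → ℝ) := {p | |p 0 - m 0| + |p 1 - m 1| + |p 2 - m 2| ≤ 1 / 27}
  have hM : MeasurableSet M := measurableSet_le (by fun_prop) (by fun_prop)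
  have hMx : M ⊆ x +ᵥ C₃ := by
    intro p hp
    have hp : |p 0 - m 0| + |p 1 - m 1| + |p 2 - m 2| ≤ 1 / 27 := hp
    have k : ∀ i, |p i - x i| ≤ |p i - m i| + |x i - y i| / 2 := by
      intro i
      have h := abs_sub_le (p i) (m i) (x i)
      rwa [show m i - x i = -((x i - y i) / 2) by simp only [m]; ring, abs_neg, abs_div,
        abs_two] at h
    rw [mem_vadd_C₃]
    linarith [k 0, k 1, k 2]
  have hMy : M ⊆ y +ᵥ C₃ := by
    intro p hp
    have hp : |p 0 - m 0| + |p 1 - m 1| + |p 2 - m 2| ≤ 1 / 27 := hp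
    have k : ∀ i, |p i - y i| ≤ |p i - m i| + |x i - y i| / 2 := by
      intro i
      have h := abs_sub_le (p i) (m i) (y i)
      rwa [show m i - y i = (x i - y i) / 2 by simp only [m]; ring, abs_div, abs_two] at h
    rw [mem_vadd_C₃]
    linarith [k 0, k 1, k 2]
  have hMP : M ⊆ P := by
    intro p hp
    have hp : |p 0 - m 0| + |p 1 - m 1| + |p 2 - m 2| ≤ 1 / 27 := hp
    have k : ∀ i, |p i| ≤ |p i - m i| + (|x i| + |y i|) / 2 := by
      intro i
      have h := abs_sub_abs_le_abs_sub (p i) (m i)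
      have h' : |m i| ≤ (|x i| + |y i|) / 2 := by
        simp only [m, abs_div, abs_two]
        linarith [abs_add_le (x i) (y i)]
      linarith
    exact mem_P_of_l1_le (by linarith [k 0, k 1, k 2])
  have hvol : volume M = 4 / 6 ^ 10 * 1024 := by
    rw [volume_l1_ball m (by norm_num)]
    have e : (4 / 6 ^ 10 * 1024 : ℝ≥0∞) = ENNReal.ofReal (4 / 6 ^ 10 * 1024) := by
      rw [ENNReal.ofReal_mul (by positivity), ENNReal.ofReal_div_of_pos (by positivity),
        ENNReal.ofReal_pow (by norm_num)]
      norm_num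
    rw [e]
    norm_num
  have hT : ⋃ z : X, (z : Fin 3 → ℝ) +ᵥ C₃ = univ := by
    rw [← hcov, biUnion_eq_iUnion]
  calc (1 + 4 / 6 ^ 10 : ℝ≥0∞) * volume P = volume P + 4 / 6 ^ 10 * volume P := by
        rw [add_mul, one_mul]
    _ ≤ volume P + volume M := by
        rw [hvol]
        gcongr
        exact volume_P_le
    _ ≤ _ := measure_add_le_tsum_of_overlap (i := ⟨x, hx⟩) (j := ⟨y, hy⟩) hT hM hMP
        (by simpa using hne) hMx hMy
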